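/- (Knowledge extraction for the extended Cramer–Damgård–Schoenmakers protocol.) Let G be a finite group of prime order p, let k, m ≥ 1, and let g, a, α : Fin k → Fin m → G. Let β, β' ∈ ZMod p with β ≠ β', and let β_i, β'_i ∈ ZMod p (for i ∈ Fin k) and γ_{i,j}, γ'_{i,j} ∈ ZMod p (for i ∈ Fin k, j ∈ Fin m) satisfy Σ_i β_i = β, Σ_i β'_i = β', and, for every i and j, (g_{i,j})^(γ_{i,j}) = α_{i,j}·(a_{i,j})^(β_i) and (g_{i,j})^(γ'_{i,j}) = α_{i,j}·(a_{i,j})^(β'_i). Then there exists i with β_i ≠ β'_i such that for every j, a_{i,j} = (g_{i,j})^((γ_{i,j} − γ'_{i,j})·(β_i − β'_i)⁻¹). -/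

import Mathlib

/-!
Two challenge vectors with different sums differ at some index `i`. In the `i`-th row, dividing the
two verification equations cancels the shared commitment and leaves
`g ^ (γ - γ') = a ^ (β - β')`; since `β - β'` is invertible modulo `p`, raising both sides to its
inverse extracts the discrete logarithm of `a`.
-/

section ZModExponent

variable {M : Type*} [Monoid M] {n : ℕ} {u : M}

theorem pow_zmod_val_add [NeZero n] (hu : u ^ n = 1) (x y : ZMod n) :
    u ^ (x + y).val = u ^ x.val * u ^ y.val := by
  rw [ZMod.val_add, ← pow_eq_pow_mod _ hu, pow_add]

theorem pow_zmod_val_mul (hu : u ^ n = 1) (x y : ZMod n) :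
    u ^ (x * y).val = (u ^ x.val) ^ y.val := by
  rw [ZMod.val_mul, ← pow_eq_pow_mod _ hu, pow_mul]

theorem pow_zmod_val_mul_inv_of_isUnit (hu : u ^ n = 1) {x : ZMod n} (hx : IsUnit x) :
    (u ^ x.val) ^ x⁻¹.val = u := by
  rw [← pow_zmod_val_mul hu, ZMod.mul_inv_of_unit x hx, ZMod.val_one_eq_one_mod,
    ← pow_eq_pow_mod _ hu, pow_one]

end ZModExponent

section TwoTranscripts

variable {M : Type*} [Monoid M] {n : ℕ} [NeZero n] {g a α : M} {β β' γ γ' : ZMod n}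

theorem pow_response_sub_eq_pow_challenge_sub (hg : g ^ n = 1) (ha : a ^ n = 1)
    (h : g ^ γ.val = α * a ^ β.val) (h' : g ^ γ'.val = α * a ^ β'.val) :
    g ^ (γ - γ').val = a ^ (β - β').val := by
  have g_isUnit : IsUnit g := .of_pow_eq_one hg (NeZero.ne n)
  refine (g_isUnit.pow γ'.val).mul_left_cancel ?_
  calc
    g ^ γ'.val * g ^ (γ - γ').val = g ^ γ.val := by
      rw [← pow_zmod_val_add hg, add_sub_cancel]
    _ = α * a ^ β.val := h
    _ = α * (a ^ β'.val * a ^ (β - β').val) := by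
      rw [← pow_zmod_val_add ha, add_sub_cancel]
    _ = g ^ γ'.val * a ^ (β - β').val := by rw [← mul_assoc, ← h']

theorem eq_pow_response_sub_mul_inv_challenge_sub (hg : g ^ n = 1) (ha : a ^ n = 1)
    (hβ : IsUnit (β - β')) (h : g ^ γ.val = α * a ^ β.val)
    (h' : g ^ γ'.val = α * a ^ β'.val) :
    a = g ^ ((γ - γ') * (β - β')⁻¹).val := by
  rw [pow_zmod_val_mul hg, pow_response_sub_eq_pow_challenge_sub hg ha h h',
    pow_zmod_val_mul_inv_of_isUnit ha hβ]

end TwoTranscripts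

theorem cds_extended_knowledge_extraction_general {ι κ M : Type*} [Fintype ι] [Monoid M]
    {p : ℕ} [Fact p.Prime] {g a α : ι → κ → M} {β β' : ι → ZMod p} {γ γ' : ι → κ → ZMod p}
    (hg : ∀ i j, g i j ^ p = 1) (ha : ∀ i j, a i j ^ p = 1) (hβ : ∑ i, β i ≠ ∑ i, β' i)
    (h : ∀ i j, g i j ^ (γ i j).val = α i j * a i j ^ (β i).val)
    (h' : ∀ i j, g i j ^ (γ' i j).val = α i j * a i j ^ (β' i).val) :
    ∃ i, β i ≠ β' i ∧ ∀ j, a i j = g i j ^ ((γ i j - γ' i j) * (β i - β' i)⁻¹).val := by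
  obtain ⟨i, hi⟩ : ∃ i, β i ≠ β' i := Function.ne_iff.mp fun heq => hβ (by rw [heq])
  have sub_isUnit : IsUnit (β i - β' i) := (sub_ne_zero.mpr hi).isUnit
  exact ⟨i, hi, fun j =>
    eq_pow_response_sub_mul_inv_challenge_sub (hg i j) (ha i j) sub_isUnit (h i j) (h' i j)⟩

/-- Knowledge extraction for the extended Cramer–Damgård–Schoenmakers protocol:
from two accepting transcripts with the same first message `α` and distinct master
challenges `β ≠ β'`, there exists an index `i` with `βi i ≠ βi' i` such that for
every `j`, the discrete logarithm of `a i j` base `g i j` can be computed: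
`a i j = (g i j) ^ ((γ i j - γ' i j) * (βi i - βi' i)⁻¹).val`. -/
theorem cds_extended_knowledge_extraction
    {G : Type} [Group G] [Fintype G] (p : ℕ) [Fact p.Prime]
    (hG : Fintype.card G = p) (k m : ℕ) (hk : 1 ≤ k) (hm : 1 ≤ m)
    (g a α : Fin k → Fin m → G) (β β' : ZMod p) (hββ' : β ≠ β')
    (βi βi' : Fin k → ZMod p) (γ γ' : Fin k → Fin m → ZMod p)
    (hsum : ∑ i, βi i = β) (hsum' : ∑ i, βi' i = β')
    (h1 : ∀ i j, (g i j) ^ (γ i j).val = α i j * (a i j) ^ (βi i).val)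
    (h2 : ∀ i j, (g i j) ^ (γ' i j).val = α i j * (a i j) ^ (βi' i).val) :
    ∃ i, βi i ≠ βi' i ∧
      ∀ j, a i j = (g i j) ^ ((γ i j - γ' i j) * (βi i - βi' i)⁻¹).val := by
  have pow_p_eq_one (u : G) : u ^ p = 1 := hG ▸ pow_card_eq_one
  exact cds_extended_knowledge_extraction_general (fun _ _ => pow_p_eq_one _)
    (fun _ _ => pow_p_eq_one _) (by rwa [hsum, hsum']) h1 h2
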